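/- Suppose the matrix Q = 2Q_ww + 2K_ywᵀ(I − K_yy)ᵀ P (I − K_yy) K_yw is positive definite, and define Φ(ψ_y) = min over ψ_w ∈ ℝ^{n_w} of G(ψ_y, ψ_w), F = Q^{−1} R with R = Q_wy + Q_ywᵀ + 2K_ywᵀ(I − K_yy)ᵀ P K_yy, and q = (Q_wu + Q_uwᵀ) ψ_u + c_w + K_ywᵀ(I − K_yy)ᵀ p + [2K_ywᵀ(I − K_yy)ᵀ P (I − K_yy) K_yx + Q_wx + Q_xwᵀ] ψ_x. Then for every ψ_y ∈ ℝ^{n_y}: (Φ(ψ_y) − Φ(−ψ_y))/2 = ℓᵀ ψ_y, where ℓ = K_yyᵀ p − Fᵀ q + (Q_yx + Q_xyᵀ + 2K_yyᵀ P (I − K_yy) K_yx) ψ_x + (Q_yu + Q_uyᵀ) ψ_u + c_y; that is, the linear part of the minimized Bellman right-hand side is the covector ℓ. -/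

import Mathlib

open Matrix Filter

noncomputable section

/-- The next-state map
`ψ_y⁺(ψ_y, ψ_w) = K_yy (ψ_y − K_yx ψ_x − K_yw ψ_w) + K_yx ψ_x + K_yw ψ_w`. -/
def nextY {nx ny nw : ℕ}
    (Kyy : Matrix (Fin ny) (Fin ny) ℝ) (Kyx : Matrix (Fin ny) (Fin nx) ℝ)
    (Kyw : Matrix (Fin ny) (Fin nw) ℝ) (ψx : Fin nx → ℝ)
    (py : Fin ny → ℝ) (pw : Fin nw → ℝ) : Fin ny → ℝ :=
  Kyy.mulVec (py - Kyx.mulVec ψx - Kyw.mulVec pw) + Kyx.mulVec ψx + Kyw.mulVec pw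

/-- The Bellman right-hand side
`G(ψ_y, ψ_w) = Σ_{i,j} ψ_iᵀ Q_{ij} ψ_j + Σ_i c_iᵀ ψ_i + c_0 + ψ_y⁺ᵀ P ψ_y⁺ + pᵀ ψ_y⁺`,
where `ψ_y⁺ = ψ_y⁺(ψ_y, ψ_w)` and the variables `x`, `u` are held at `ψ_x`, `ψ_u`. -/
def bellmanG {nx ny nw nu : ℕ}
    (Kyy : Matrix (Fin ny) (Fin ny) ℝ) (Kyx : Matrix (Fin ny) (Fin nx) ℝ)
    (Kyw : Matrix (Fin ny) (Fin nw) ℝ)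
    (Qxx : Matrix (Fin nx) (Fin nx) ℝ) (Qxy : Matrix (Fin nx) (Fin ny) ℝ)
    (Qxw : Matrix (Fin nx) (Fin nw) ℝ) (Qxu : Matrix (Fin nx) (Fin nu) ℝ)
    (Qyx : Matrix (Fin ny) (Fin nx) ℝ) (Qyy : Matrix (Fin ny) (Fin ny) ℝ)
    (Qyw : Matrix (Fin ny) (Fin nw) ℝ) (Qyu : Matrix (Fin ny) (Fin nu) ℝ)
    (Qwx : Matrix (Fin nw) (Fin nx) ℝ) (Qwy : Matrix (Fin nw) (Fin ny) ℝ)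
    (Qww : Matrix (Fin nw) (Fin nw) ℝ) (Qwu : Matrix (Fin nw) (Fin nu) ℝ)
    (Qux : Matrix (Fin nu) (Fin nx) ℝ) (Quy : Matrix (Fin nu) (Fin ny) ℝ)
    (Quw : Matrix (Fin nu) (Fin nw) ℝ) (Quu : Matrix (Fin nu) (Fin nu) ℝ)
    (cx : Fin nx → ℝ) (cy : Fin ny → ℝ) (cw : Fin nw → ℝ) (cu : Fin nu → ℝ)
    (c0 : ℝ) (ψx : Fin nx → ℝ) (ψu : Fin nu → ℝ)
    (P : Matrix (Fin ny) (Fin ny) ℝ) (p : Fin ny → ℝ)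
    (py : Fin ny → ℝ) (pw : Fin nw → ℝ) : ℝ :=
  ψx ⬝ᵥ Qxx.mulVec ψx + ψx ⬝ᵥ Qxy.mulVec py + ψx ⬝ᵥ Qxw.mulVec pw +
    ψx ⬝ᵥ Qxu.mulVec ψu +
  py ⬝ᵥ Qyx.mulVec ψx + py ⬝ᵥ Qyy.mulVec py + py ⬝ᵥ Qyw.mulVec pw +
    py ⬝ᵥ Qyu.mulVec ψu +
  pw ⬝ᵥ Qwx.mulVec ψx + pw ⬝ᵥ Qwy.mulVec py + pw ⬝ᵥ Qww.mulVec pw +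
    pw ⬝ᵥ Qwu.mulVec ψu +
  ψu ⬝ᵥ Qux.mulVec ψx + ψu ⬝ᵥ Quy.mulVec py + ψu ⬝ᵥ Quw.mulVec pw +
    ψu ⬝ᵥ Quu.mulVec ψu +
  cx ⬝ᵥ ψx + cy ⬝ᵥ py + cw ⬝ᵥ pw + cu ⬝ᵥ ψu + c0 +
  nextY Kyy Kyx Kyw ψx py pw ⬝ᵥ P.mulVec (nextY Kyy Kyx Kyw ψx py pw) +
  p ⬝ᵥ nextY Kyy Kyx Kyw ψx py pw

theorem dot_tr {m n : ℕ} (M : Matrix (Fin m) (Fin n) ℝ) (v : Fin n → ℝ) (w : Fin m → ℝ) :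
    v ⬝ᵥ (Mᵀ *ᵥ w) = (M *ᵥ v) ⬝ᵥ w := by
  rw [mulVec_transpose, dotProduct_comm, ← dotProduct_mulVec, dotProduct_comm]

theorem dot_symm {n : ℕ} (M : Matrix (Fin n) (Fin n) ℝ) (hM : M.IsSymm) (v w : Fin n → ℝ) :
    v ⬝ᵥ (M *ᵥ w) = w ⬝ᵥ (M *ᵥ v) := by
  conv_lhs => rw [← hM.eq, dot_tr, dotProduct_comm]

theorem nextY_eq {nx ny nw : ℕ}
    (Kyy : Matrix (Fin ny) (Fin ny) ℝ) (Kyx : Matrix (Fin ny) (Fin nx) ℝ)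
    (Kyw : Matrix (Fin ny) (Fin nw) ℝ) (ψx : Fin nx → ℝ)
    (py : Fin ny → ℝ) (pw : Fin nw → ℝ) :
    nextY Kyy Kyx Kyw ψx py pw =
      Kyy *ᵥ py + (1 - Kyy) *ᵥ (Kyx *ᵥ ψx) + (1 - Kyy) *ᵥ (Kyw *ᵥ pw) := by
  simp only [nextY, sub_mulVec, one_mulVec, mulVec_sub]
  abel

/-- Infimum of a positive definite quadratic. -/
theorem iInf_quad {n : ℕ} (Q : Matrix (Fin n) (Fin n) ℝ) (hQ : Q.PosDef)
    (g : (Fin n → ℝ) → ℝ) (a : ℝ) (s : Fin n → ℝ)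
    (hg : ∀ w, g w = a + 1 / 2 * (w ⬝ᵥ (Q *ᵥ w)) + w ⬝ᵥ s) :
    ⨅ w, g w = a - 1 / 2 * (s ⬝ᵥ (Q⁻¹ *ᵥ s)) := by
  have hs : Q.IsSymm := by
    have := hQ.isHermitian
    simpa [Matrix.IsHermitian, Matrix.IsSymm, conjTranspose_eq_transpose_of_trivial] using this
  have hu : IsUnit Q.det := (Matrix.isUnit_iff_isUnit_det Q).1 hQ.isUnit
  have hQi : Q *ᵥ (Q⁻¹ *ᵥ s) = s := by
    rw [mulVec_mulVec, Matrix.mul_nonsing_inv _ hu, one_mulVec]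
  have key : ∀ w, g w = a - 1 / 2 * (s ⬝ᵥ (Q⁻¹ *ᵥ s)) +
      1 / 2 * ((w + Q⁻¹ *ᵥ s) ⬝ᵥ (Q *ᵥ (w + Q⁻¹ *ᵥ s))) := by
    intro w
    rw [hg, mulVec_add, hQi, add_dotProduct, dotProduct_add, dotProduct_add,
      dot_symm Q hs (Q⁻¹ *ᵥ s) w, hQi, dotProduct_comm (Q⁻¹ *ᵥ s) s]
    ring
  have nn : ∀ v, 0 ≤ v ⬝ᵥ (Q *ᵥ v) := by
    intro v
    simpa using hQ.posSemidef.dotProduct_mulVec_nonneg v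
  apply le_antisymm
  · refine (ciInf_le ⟨a - 1 / 2 * (s ⬝ᵥ (Q⁻¹ *ᵥ s)), ?_⟩ (-(Q⁻¹ *ᵥ s))).trans ?_
    · rintro _ ⟨w, rfl⟩
      have := nn (w + Q⁻¹ *ᵥ s)
      simp only [key]
      linarith
    · rw [key]; simp
  · apply le_ciInf
    intro w
    have := nn (w + Q⁻¹ *ᵥ s)
    rw [key]
    linarith

/-- If `Q = 2Q_ww + 2K_ywᵀ(I − K_yy)ᵀ P (I − K_yy) K_yw` is
positive definite, `Φ(ψ_y) = min_{ψ_w} G(ψ_y, ψ_w)`, `F = Q⁻¹ R` with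
`R = Q_wy + Q_ywᵀ + 2K_ywᵀ(I − K_yy)ᵀ P K_yy`, and
`q = (Q_wu + Q_uwᵀ) ψ_u + c_w + K_ywᵀ(I − K_yy)ᵀ p +
[2K_ywᵀ(I − K_yy)ᵀ P (I − K_yy) K_yx + Q_wx + Q_xwᵀ] ψ_x`, then for every `ψ_y`,
`(Φ(ψ_y) − Φ(−ψ_y))/2 = ℓᵀ ψ_y` with
`ℓ = K_yyᵀ p − Fᵀ q + (Q_yx + Q_xyᵀ + 2K_yyᵀ P (I − K_yy) K_yx) ψ_x +
(Q_yu + Q_uyᵀ) ψ_u + c_y`: the linear part of the minimized Bellman right-hand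
side is the covector `ℓ`. -/
theorem bellman_linear_part {nx ny nw nu : ℕ}
    (Kyy : Matrix (Fin ny) (Fin ny) ℝ) (Kyx : Matrix (Fin ny) (Fin nx) ℝ)
    (Kyw : Matrix (Fin ny) (Fin nw) ℝ)
    (Qxx : Matrix (Fin nx) (Fin nx) ℝ) (Qxy : Matrix (Fin nx) (Fin ny) ℝ)
    (Qxw : Matrix (Fin nx) (Fin nw) ℝ) (Qxu : Matrix (Fin nx) (Fin nu) ℝ)
    (Qyx : Matrix (Fin ny) (Fin nx) ℝ) (Qyy : Matrix (Fin ny) (Fin ny) ℝ)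
    (Qyw : Matrix (Fin ny) (Fin nw) ℝ) (Qyu : Matrix (Fin ny) (Fin nu) ℝ)
    (Qwx : Matrix (Fin nw) (Fin nx) ℝ) (Qwy : Matrix (Fin nw) (Fin ny) ℝ)
    (Qww : Matrix (Fin nw) (Fin nw) ℝ) (Qwu : Matrix (Fin nw) (Fin nu) ℝ)
    (Qux : Matrix (Fin nu) (Fin nx) ℝ) (Quy : Matrix (Fin nu) (Fin ny) ℝ)
    (Quw : Matrix (Fin nu) (Fin nw) ℝ) (Quu : Matrix (Fin nu) (Fin nu) ℝ)
    (cx : Fin nx → ℝ) (cy : Fin ny → ℝ) (cw : Fin nw → ℝ) (cu : Fin nu → ℝ)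
    (c0 : ℝ) (ψx : Fin nx → ℝ) (ψu : Fin nu → ℝ)
    (P : Matrix (Fin ny) (Fin ny) ℝ) (p : Fin ny → ℝ)
    (hQww : Qww.IsSymm) (hQyy : Qyy.IsSymm) (hP : P.IsSymm)
    (Q : Matrix (Fin nw) (Fin nw) ℝ)
    (hQ : Q = (2 : ℝ) • Qww +
      (2 : ℝ) • (Kywᵀ * (1 - Kyy)ᵀ * P * (1 - Kyy) * Kyw))
    (hQpos : Q.PosDef)
    (F : Matrix (Fin nw) (Fin ny) ℝ)
    (hF : F = Q⁻¹ * (Qwy + Qywᵀ + (2 : ℝ) • (Kywᵀ * (1 - Kyy)ᵀ * P * Kyy)))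
    (q : Fin nw → ℝ)
    (hq : q = (Qwu + Quwᵀ).mulVec ψu + cw + (Kywᵀ * (1 - Kyy)ᵀ).mulVec p +
      ((2 : ℝ) • (Kywᵀ * (1 - Kyy)ᵀ * P * (1 - Kyy) * Kyx) + Qwx + Qxwᵀ).mulVec ψx)
    (Φ : (Fin ny → ℝ) → ℝ)
    (hΦ : ∀ py : Fin ny → ℝ,
      Φ py = ⨅ pw : Fin nw → ℝ,
        bellmanG Kyy Kyx Kyw Qxx Qxy Qxw Qxu Qyx Qyy Qyw Qyu Qwx Qwy Qww Qwu
          Qux Quy Quw Quu cx cy cw cu c0 ψx ψu P p py pw) :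
    ∀ py : Fin ny → ℝ,
      (Φ py - Φ (-py)) / 2 =
        (Kyyᵀ.mulVec p - Fᵀ.mulVec q +
          (Qyx + Qxyᵀ + (2 : ℝ) • (Kyyᵀ * P * (1 - Kyy) * Kyx)).mulVec ψx +
          (Qyu + Quyᵀ).mulVec ψu + cy) ⬝ᵥ py := by
  have hQs : Q.IsSymm := by
    have := hQpos.isHermitian
    simpa [Matrix.IsHermitian, Matrix.IsSymm, conjTranspose_eq_transpose_of_trivial] using this
  have hQis : (Q⁻¹).IsSymm := by
    rw [Matrix.IsSymm, Matrix.transpose_nonsing_inv, hQs.eq]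
  obtain ⟨R, hR⟩ : ∃ R, R = Qwy + Qywᵀ + (2 : ℝ) • (Kywᵀ * (1 - Kyy)ᵀ * P * Kyy) := ⟨_, rfl⟩
  have hval : ∀ py, Φ py = bellmanG Kyy Kyx Kyw Qxx Qxy Qxw Qxu Qyx Qyy Qyw Qyu Qwx Qwy Qww Qwu
          Qux Quy Quw Quu cx cy cw cu c0 ψx ψu P p py 0
          - 1 / 2 * ((q + R *ᵥ py) ⬝ᵥ (Q⁻¹ *ᵥ (q + R *ᵥ py))) := by
    intro py
    rw [hΦ]
    apply iInf_quad Q hQpos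
    intro pw
    rw [hQ, hq, hR]
    simp only [bellmanG, nextY_eq]
    generalize 1 - Kyy = A
    simp only [← mulVec_mulVec, add_mulVec, smul_mulVec, dotProduct_add, add_dotProduct,
      dotProduct_smul, dot_tr, mulVec_add, mulVec_zero, dotProduct_zero, zero_dotProduct,
      smul_eq_mul]
    rw [dot_symm P hP (A *ᵥ Kyw *ᵥ pw) (Kyy *ᵥ py),
      dot_symm P hP (A *ᵥ Kyw *ᵥ pw) (A *ᵥ Kyx *ᵥ ψx),
      dotProduct_comm cw pw, dotProduct_comm p (A *ᵥ Kyw *ᵥ pw),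
      dotProduct_comm (Qxw *ᵥ pw) ψx, dotProduct_comm (Quw *ᵥ pw) ψu,
      dotProduct_comm (Qyw *ᵥ pw) py]
    ring
  intro py
  rw [← hR] at hF
  rw [hval, hval, hF]
  rw [dotProduct_comm _ py]
  simp only [bellmanG, nextY_eq]
  generalize 1 - Kyy = A
  simp only [← mulVec_mulVec, add_mulVec, smul_mulVec, dotProduct_add, add_dotProduct,
    dotProduct_sub, dotProduct_neg, neg_dotProduct, mulVec_neg,
    dotProduct_smul, dot_tr, mulVec_add, mulVec_zero, dotProduct_zero, zero_dotProduct,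
    smul_eq_mul]
  rw [dot_symm P hP (A *ᵥ Kyx *ᵥ ψx) (Kyy *ᵥ py),
    dot_symm Q⁻¹ hQis (R *ᵥ py) q, dotProduct_comm (Q⁻¹ *ᵥ R *ᵥ py) q,
    dotProduct_comm cy py, dotProduct_comm p (Kyy *ᵥ py),
    dotProduct_comm (Qxy *ᵥ py) ψx, dotProduct_comm (Quy *ᵥ py) ψu]
  ring
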